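/- Let a ∈ (0, 1/3] and I_a := (1−2a, 1−a). Let n ≥ 0 be an integer, M ≥ 1, and let P be a polynomial of the form P(x) = Σ_{j=0}^{n} b_j a_j x^j with a_j ∈ [1, M], b_j ∈ {−1, 0, 1} for all j, and b_0 ∈ {−1, 1}. Then the geometric mean of |P| on I_a satisfies ‖P‖_{L_0(I_a)} := exp( (1/a) ∫_{1−2a}^{1−a} log|P(x)| dx ) ≥ exp( −c_1 log(4M)/a ), where c_1 := 9π/√2. -/

import Mathlib

/-!
A bounded analytic function on the unit disc cannot be small on average over the unit circle unless
it is small at `0`, by Jensen's inequality. To see `I_a`, which lies inside the disc, precompose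
with the conformal map `Φ`, `Φ 0 = 0`, from the unit disc onto the disc `D` of diameter `[-1/3, 1]`
slit along `[1 - 2a, 1)`: both sides of the slit are images of boundary arcs, and over `I_a` these
arcs have angular density at least `1/6`.

The growth `‖f z‖ ≤ M / (1 - ‖z‖)` is harmless because `D` is internally tangent to the unit circle
at `1`, so `‖1 - z‖² ≤ 4 (1 - ‖z‖)` on `D` and `f z * (1 - z)² / (4M)` is bounded by `1` there.
Replacing `f` by this function only increases `-log ‖f‖` on `I_a`.
-/

open MeasureTheory Set Filter Topology Metric
open Real (pi_pos log)
open scoped Real ENNReal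

/-! ### Jensen's inequality on the unit disc -/

theorem log_norm_le_circleAverage_log_norm {f : ℂ → ℂ} {c : ℂ} {R : ℝ}
    (hf : AnalyticOnNhd ℂ f (closedBall c |R|)) (hc : f c ≠ 0) :
    log ‖f c‖ ≤ Real.circleAverage (fun z ↦ log ‖f z‖) c R := by
  wlog hR : 0 ≤ R generalizing R
  · rw [← Real.circleAverage_neg_radius]
    exact this (by rwa [abs_neg]) (by linarith)
  rcases hR.eq_or_lt with rfl | hR
  · simp
  rw [hf.circleAverage_log_norm hR.ne' hc, le_add_iff_nonneg_left]
  refine finsum_nonneg fun u ↦ ?_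
  by_cases hu : u ∈ closedBall c |R|
  · refine mul_nonneg (mod_cast MeromorphicOn.AnalyticOnNhd.divisor_nonneg hf u) ?_
    rw [mem_closedBall', dist_eq_norm, abs_of_pos hR] at hu
    rcases (norm_nonneg (c - u)).eq_or_lt with h | h
    · simp [← h]
    · exact Real.log_nonneg (by rwa [← div_eq_mul_inv, one_le_div h])
  · simp [hu]

theorem lintegral_neg_log_norm_circleMap_le {f : ℂ → ℂ} {c : ℂ} {R : ℝ}
    (hf : AnalyticOnNhd ℂ f (closedBall c |R|)) (hf1 : ∀ z ∈ sphere c |R|, ‖f z‖ ≤ 1)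
    (hc : f c ≠ 0) :
    ∫⁻ θ in Ioo (-π) π, ENNReal.ofReal (-log ‖f (circleMap c R θ)‖) ≤
      ENNReal.ofReal (2 * π * -log ‖f c‖) := by
  have hper : Function.Periodic (fun θ ↦ log ‖f (circleMap c R θ)‖) (2 * π) := fun θ ↦ by
    simp only [periodic_circleMap c R θ]
  have hint : IntervalIntegrable (fun θ ↦ log ‖f (circleMap c R θ)‖) volume (-π) π :=
    hper.intervalIntegrable (t := 0) Real.two_pi_pos.ne' (by
      rw [zero_add]
      exact (hf.mono sphere_subset_closedBall).meromorphicOn.circleIntegrable_log_norm) _ _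
  have hle : -π ≤ π := by linarith [pi_pos]
  have hjensen : 2 * π * log ‖f c‖ ≤ ∫ θ in -π..π, log ‖f (circleMap c R θ)‖ := by
    have hshift := hper.intervalIntegral_add_eq (-π) 0
    rw [zero_add, show -π + 2 * π = π by ring] at hshift
    have h := log_norm_le_circleAverage_log_norm hf hc
    rwa [Real.circleAverage_def, smul_eq_mul, inv_mul_eq_div, le_div_iff₀' Real.two_pi_pos,
      ← hshift] at h
  rw [restrict_Ioo_eq_restrict_Ioc, ← ofReal_integral_eq_lintegral_ofReal,
    ← intervalIntegral.integral_of_le hle, intervalIntegral.integral_neg]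
  · exact ENNReal.ofReal_le_ofReal (by linarith)
  · exact ((intervalIntegrable_iff_integrableOn_Ioc_of_le hle).1 hint).neg
  · exact .of_forall fun θ ↦ neg_nonneg.2 <|
      Real.log_nonpos (norm_nonneg _) (hf1 _ (circleMap_mem_sphere' c R θ))

theorem lintegral_liminf_neg_log_norm_circleMap_le {f : ℂ → ℂ}
    (hf : DifferentiableOn ℂ f (ball 0 1)) (hf1 : ∀ z ∈ ball 0 1, ‖f z‖ ≤ 1) (hf0 : f 0 ≠ 0)
    {ρ : ℕ → ℝ} (hρ : ∀ n, |ρ n| < 1) :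
    ∫⁻ θ in Ioo (-π) π, liminf (fun n ↦ ENNReal.ofReal (-log ‖f (circleMap 0 (ρ n) θ)‖)) atTop ≤
      ENNReal.ofReal (2 * π * -log ‖f 0‖) := by
  have hmeas (n : ℕ) : Measurable fun θ ↦ ENNReal.ofReal (-log ‖f (circleMap 0 (ρ n) θ)‖) := by
    have hcont : Continuous fun θ ↦ f (circleMap 0 (ρ n) θ) :=
      hf.continuousOn.comp_continuous (continuous_circleMap 0 _) (by simpa using hρ n)
    exact (Real.measurable_log.comp hcont.norm.measurable).neg.ennreal_ofReal
  have hcircle (n : ℕ) : ∫⁻ θ in Ioo (-π) π, ENNReal.ofReal (-log ‖f (circleMap 0 (ρ n) θ)‖) ≤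
      ENNReal.ofReal (2 * π * -log ‖f 0‖) :=
    have hsub : closedBall (0 : ℂ) |ρ n| ⊆ ball 0 1 := closedBall_subset_ball (hρ n)
    lintegral_neg_log_norm_circleMap_le ((hf.analyticOnNhd isOpen_ball).mono hsub)
      (fun z hz ↦ hf1 z (hsub (sphere_subset_closedBall hz))) hf0
  exact (lintegral_liminf_le hmeas).trans <|
    liminf_le_of_frequently_le' (.of_forall hcircle)

/-- Where the limit vanishes the left side is `0`, because `log 0 = 0`. -/
theorem ofReal_neg_log_norm_le_liminf {ι : Type*} {l : Filter ι} [l.NeBot] {u : ι → ℂ} {z : ℂ}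
    (hu : Tendsto u l (𝓝 z)) :
    ENNReal.ofReal (-log ‖z‖) ≤ liminf (fun i ↦ ENNReal.ofReal (-log ‖u i‖)) l := by
  rcases eq_or_ne z 0 with rfl | hz
  · simp
  · exact (ENNReal.tendsto_ofReal (hu.norm.log (norm_ne_zero_iff.2 hz)).neg).liminf_eq.ge

/-! ### Boundary arcs in the unit circle -/

theorem ofReal_mul_setLIntegral_comp_le {δ p q : ℝ} {t : ℝ → ℝ} (hδ : 0 ≤ δ)
    (ht : ∀ x ∈ Ioo p q, DifferentiableAt ℝ t x) (ht' : ∀ x ∈ Ioo p q, δ ≤ deriv t x)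
    (F : ℝ → ℝ≥0∞) :
    ENNReal.ofReal δ * ∫⁻ x in Ioo p q, F (t x) ≤ ∫⁻ θ in t '' Ioo p q, F θ := by
  have hmono : MonotoneOn t (Ioo p q) := by
    refine monotoneOn_of_deriv_nonneg (convex_Ioo p q)
      (fun x hx ↦ (ht x hx).continuousAt.continuousWithinAt) ?_ ?_ <;> rw [interior_Ioo]
    · exact fun x hx ↦ (ht x hx).differentiableWithinAt
    · exact fun x hx ↦ hδ.trans (ht' x hx)
  rw [lintegral_image_eq_lintegral_deriv_mul_of_monotoneOn measurableSet_Ioo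
    (fun x hx ↦ (ht x hx).hasDerivAt.hasDerivWithinAt) hmono,
    ← lintegral_const_mul' _ _ ENNReal.ofReal_ne_top]
  refine setLIntegral_mono' measurableSet_Ioo fun x hx ↦ ?_
  gcongr
  exact ht' x hx

theorem two_mul_ofReal_mul_setLIntegral_le {δ p q R : ℝ} {t : ℝ → ℝ} {F G : ℝ → ℝ≥0∞}
    (hδ : 0 ≤ δ) (ht : ∀ x ∈ Ioo p q, DifferentiableAt ℝ t x)
    (ht' : ∀ x ∈ Ioo p q, δ ≤ deriv t x) (htmaps : MapsTo t (Ioo p q) (Ioo 0 R))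
    (hpos : ∀ x ∈ Ioo p q, G x ≤ F (t x)) (hneg : ∀ x ∈ Ioo p q, G x ≤ F (-t x)) :
    2 * (ENNReal.ofReal δ * ∫⁻ x in Ioo p q, G x) ≤ ∫⁻ θ in Ioo (-R) R, F θ := by
  have hside (H : ℝ → ℝ≥0∞) (hH : ∀ x ∈ Ioo p q, G x ≤ H (t x)) :
      ENNReal.ofReal δ * ∫⁻ x in Ioo p q, G x ≤ ∫⁻ θ in Ioo 0 R, H θ :=
    calc ENNReal.ofReal δ * ∫⁻ x in Ioo p q, G x
      _ ≤ ENNReal.ofReal δ * ∫⁻ x in Ioo p q, H (t x) :=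
          mul_le_mul' le_rfl (setLIntegral_mono' measurableSet_Ioo hH)
      _ ≤ ∫⁻ θ in t '' Ioo p q, H θ := ofReal_mul_setLIntegral_comp_le hδ ht ht' H
      _ ≤ ∫⁻ θ in Ioo 0 R, H θ := lintegral_mono_set htmaps.image_subset
  have hreflect : ∫⁻ θ in Ioo 0 R, F (-θ) = ∫⁻ θ in Ioo (-R) 0, F θ := by
    simpa only [neg_preimage, neg_Ioo, neg_zero, neg_neg] using
      (Measure.measurePreserving_neg (volume : Measure ℝ)).setLIntegral_comp_preimage_emb
        (MeasurableEquiv.neg ℝ).measurableEmbedding F (Ioo (-R) 0)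
  have hdisj : Disjoint (Ioo 0 R) (Ioo (-R) 0) :=
    disjoint_left.2 fun θ h h' ↦ h.1.not_gt h'.2
  have hsub : Ioo 0 R ∪ Ioo (-R) 0 ⊆ Ioo (-R) R := by
    rintro θ (h | h) <;> constructor <;> linarith [h.1, h.2]
  calc 2 * (ENNReal.ofReal δ * ∫⁻ x in Ioo p q, G x)
    _ ≤ (∫⁻ θ in Ioo 0 R, F θ) + ∫⁻ θ in Ioo (-R) 0, F θ := by
        rw [two_mul]
        exact add_le_add (hside F hpos) (hreflect ▸ hside (fun θ ↦ F (-θ)) hneg)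
    _ = ∫⁻ θ in Ioo 0 R ∪ Ioo (-R) 0, F θ := (lintegral_union measurableSet_Ioo hdisj).symm
    _ ≤ ∫⁻ θ in Ioo (-R) R, F θ := lintegral_mono_set hsub

theorem setLIntegral_neg_log_norm_boundary_le {f : ℂ → ℂ} {g : ℝ → ℂ} {δ p q : ℝ} {t : ℝ → ℝ}
    (hf : DifferentiableOn ℂ f (ball 0 1)) (hf1 : ∀ z ∈ ball 0 1, ‖f z‖ ≤ 1) (hf0 : f 0 ≠ 0)
    (hδ : 0 < δ) (ht : ∀ x ∈ Ioo p q, DifferentiableAt ℝ t x)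
    (ht' : ∀ x ∈ Ioo p q, δ ≤ deriv t x) (htmaps : MapsTo t (Ioo p q) (Ioo 0 π))
    (hg : ∀ x ∈ Ioo p q, ∀ θ, θ = t x ∨ θ = -t x →
      Tendsto f (𝓝 (circleMap 0 1 θ)) (𝓝 (g x))) :
    ∫⁻ x in Ioo p q, ENNReal.ofReal (-log ‖g x‖) ≤ ENNReal.ofReal (π * -log ‖f 0‖ / δ) := by
  obtain ⟨ρ, -, hρ, hρlim⟩ := exists_seq_strictMono_tendsto' (zero_lt_one' ℝ)
  have hradial (θ : ℝ) : Tendsto (fun n ↦ circleMap 0 (ρ n) θ) atTop (𝓝 (circleMap 0 1 θ)) := by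
    have hcont : Continuous fun r : ℝ ↦ circleMap 0 r θ := by unfold circleMap; fun_prop
    exact (hcont.tendsto 1).comp hρlim
  have hliminf (x) (hx : x ∈ Ioo p q) (θ) (hθ : θ = t x ∨ θ = -t x) :
      ENNReal.ofReal (-log ‖g x‖) ≤
        liminf (fun n ↦ ENNReal.ofReal (-log ‖f (circleMap 0 (ρ n) θ)‖)) atTop :=
    ofReal_neg_log_norm_le_liminf ((hg x hx θ hθ).comp (hradial θ))
  have htwo : 2 * (ENNReal.ofReal δ * ∫⁻ x in Ioo p q, ENNReal.ofReal (-log ‖g x‖)) ≤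
      2 * ENNReal.ofReal (π * -log ‖f 0‖) :=
    calc 2 * (ENNReal.ofReal δ * ∫⁻ x in Ioo p q, ENNReal.ofReal (-log ‖g x‖))
      _ ≤ ∫⁻ θ in Ioo (-π) π,
            liminf (fun n ↦ ENNReal.ofReal (-log ‖f (circleMap 0 (ρ n) θ)‖)) atTop :=
          two_mul_ofReal_mul_setLIntegral_le hδ.le ht ht' htmaps
            (fun x hx ↦ hliminf x hx _ (.inl rfl)) (fun x hx ↦ hliminf x hx _ (.inr rfl))
      _ ≤ ENNReal.ofReal (2 * π * -log ‖f 0‖) :=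
          lintegral_liminf_neg_log_norm_circleMap_le hf hf1 hf0 fun n ↦
            abs_lt.2 ⟨by linarith [(hρ n).1], (hρ n).2⟩
      _ = 2 * ENNReal.ofReal (π * -log ‖f 0‖) := by
          rw [mul_assoc, ENNReal.ofReal_mul zero_le_two, ENNReal.ofReal_ofNat]
  rw [ENNReal.ofReal_div_of_pos hδ, ENNReal.le_div_iff_mul_le
    (.inl (ENNReal.ofReal_pos.2 hδ).ne') (.inl ENNReal.ofReal_ne_top), mul_comm]
  exact (ENNReal.mul_le_mul_iff_right two_ne_zero ENNReal.ofNat_ne_top).1 htwo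

theorem integral_le_of_lintegral_ofReal_le {α : Type*} {m : MeasurableSpace α} {μ : Measure α}
    {f : α → ℝ} {B : ℝ} (hf : Integrable f μ) (hB : 0 ≤ B)
    (h : ∫⁻ x, ENNReal.ofReal (f x) ∂μ ≤ ENNReal.ofReal B) : ∫ x, f x ∂μ ≤ B := by
  rw [integral_eq_lintegral_pos_part_sub_lintegral_neg_part hf]
  exact (sub_le_self _ ENNReal.toReal_nonneg).trans (ENNReal.toReal_le_of_le_ofReal hB h)

theorem intervalIntegrable_log_norm_ofReal {f : ℂ → ℂ} {p q : ℝ}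
    (hf : ∀ x ∈ uIcc p q, AnalyticAt ℂ f x) :
    IntervalIntegrable (fun x : ℝ ↦ log ‖f x‖) volume p q :=
  MeromorphicOn.intervalIntegrable_log_norm fun x hx ↦
    ((hf x hx).restrictScalars.comp (Complex.ofRealCLM.analyticAt x)).meromorphicAt

/-! ### The slit disc -/

/-- The Cayley transform, from the unit disc onto the right half-plane. -/
noncomputable def cayleyMap (w : ℂ) : ℂ := (1 - w) / (1 + w)

theorem one_add_ne_zero_of_mem_ball {w : ℂ} (hw : w ∈ ball 0 1) : 1 + w ≠ 0 := by
  intro h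
  simp [eq_neg_of_add_eq_zero_right h] at hw

theorem re_cayleyMap_pos {w : ℂ} (hw : w ∈ ball 0 1) : 0 < (cayleyMap w).re := by
  have hw1 : w.re * w.re + w.im * w.im < 1 := by
    rw [← Complex.normSq_apply, Complex.normSq_eq_norm_sq, sq_lt_one_iff₀ (norm_nonneg w)]
    simpa using hw
  rw [cayleyMap, Complex.div_re, ← add_div]
  refine div_pos ?_ (Complex.normSq_pos.2 (one_add_ne_zero_of_mem_ball hw))
  simp only [Complex.sub_re, Complex.add_re, Complex.sub_im, Complex.add_im, Complex.one_re,
    Complex.one_im]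
  linarith

theorem circleMap_zero_one_two_mul (α : ℝ) :
    circleMap 0 1 (2 * α) = (Complex.cos α + Complex.sin α * Complex.I) ^ 2 := by
  rw [← Complex.exp_mul_I, ← Complex.exp_nat_mul, circleMap, zero_add, Complex.ofReal_one, one_mul]
  push_cast
  rw [mul_assoc]

theorem one_add_circleMap_two_mul (α : ℝ) : 1 + circleMap 0 1 (2 * α) =
    2 * Complex.cos α * (Complex.cos α + Complex.sin α * Complex.I) := by
  rw [circleMap_zero_one_two_mul]
  linear_combination -Complex.cos_sq_add_sin_sq α + Complex.sin α ^ 2 * Complex.I_sq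

theorem one_sub_circleMap_two_mul (α : ℝ) : 1 - circleMap 0 1 (2 * α) =
    -(2 * Complex.sin α * Complex.I) * (Complex.cos α + Complex.sin α * Complex.I) := by
  rw [circleMap_zero_one_two_mul]
  linear_combination -Complex.cos_sq_add_sin_sq α + Complex.sin α ^ 2 * Complex.I_sq

theorem cos_add_sin_mul_I_ne_zero (α : ℂ) : Complex.cos α + Complex.sin α * Complex.I ≠ 0 :=
  Complex.exp_mul_I α ▸ Complex.exp_ne_zero _

theorem one_add_circleMap_two_mul_ne_zero {α : ℝ} (hα : Complex.cos α ≠ 0) :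
    1 + circleMap 0 1 (2 * α) ≠ 0 :=
  one_add_circleMap_two_mul α ▸
    mul_ne_zero (mul_ne_zero two_ne_zero hα) (cos_add_sin_mul_I_ne_zero α)

theorem cayleyMap_circleMap_two_mul {α : ℝ} (hα : Complex.cos α ≠ 0) :
    cayleyMap (circleMap 0 1 (2 * α)) = -(Complex.tan α * Complex.I) := by
  have h := cos_add_sin_mul_I_ne_zero α
  rw [cayleyMap, one_add_circleMap_two_mul, one_sub_circleMap_two_mul, Complex.tan]
  field_simp

theorem re_csqrt_pos {z : ℂ} (hz : z ∈ Complex.slitPlane) : 0 < (Complex.sqrt z).re := by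
  rw [Complex.sqrt, Complex.cpow_inv_two_re, Real.sqrt_pos]
  rcases Complex.mem_slitPlane_iff.1 hz with h | h
  · positivity
  · linarith [neg_abs_le z.re, Complex.abs_re_lt_norm.2 h]

/-- The conformal map fixing `1` from the right half-plane onto the right half-plane slit along
`(0, e]`. -/
noncomputable def slitHalfPlaneMap (e : ℝ) (q : ℂ) : ℂ :=
  Complex.sqrt (e ^ 2 + (1 - e ^ 2) * q ^ 2)

theorem sq_add_mul_sq_mem_slitPlane {e : ℝ} {q : ℂ} (he : 0 < e) (he1 : e < 1)
    (hq : 0 < q.re) : (e ^ 2 + (1 - e ^ 2) * q ^ 2 : ℂ) ∈ Complex.slitPlane := by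
  have hk : 0 < 1 - e ^ 2 := by nlinarith
  have hre : (e ^ 2 + (1 - e ^ 2) * q ^ 2 : ℂ).re
      = e ^ 2 + (1 - e ^ 2) * (q.re ^ 2 - q.im ^ 2) := by
    simp [sq]
  have him : (e ^ 2 + (1 - e ^ 2) * q ^ 2 : ℂ).im = 2 * (1 - e ^ 2) * q.re * q.im := by
    simp only [sq, Complex.add_im, Complex.mul_im, Complex.ofReal_re, Complex.ofReal_im, mul_zero,
      zero_mul, add_zero, Complex.sub_re, Complex.one_re, Complex.mul_re, sub_zero, Complex.sub_im,
      Complex.one_im, sub_self, zero_add]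
    ring
  rw [Complex.mem_slitPlane_iff, hre, him]
  rcases eq_or_ne q.im 0 with h | h
  · left
    rw [h, zero_pow two_ne_zero, sub_zero]
    positivity
  · right
    exact mul_ne_zero (mul_ne_zero (mul_ne_zero two_ne_zero hk.ne') hq.ne') h

/-- The Möbius involution exchanging the right half-plane and the disc with diameter
`[-1/3, 1]`. -/
noncomputable def halfPlaneToDisc (S : ℂ) : ℂ := (1 - S) / (1 + 3 * S)

theorem one_add_three_mul_ne_zero {S : ℂ} (hS : 0 < S.re) : 1 + 3 * S ≠ 0 := fun h ↦ by
  have hre : 1 + 3 * S.re = 0 := by simpa using congrArg Complex.re h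
  linarith

theorem halfPlaneToDisc_mem_ball {S : ℂ} (hS : 0 < S.re) :
    halfPlaneToDisc S ∈ ball (1 / 3 : ℂ) (2 / 3) := by
  have h := one_add_three_mul_ne_zero hS
  have hsub : halfPlaneToDisc S - 1 / 3 = 2 / 3 * ((1 - 3 * S) / (1 + 3 * S)) := by
    rw [halfPlaneToDisc]
    linear_combination (1 / 3 : ℂ) * mul_inv_cancel₀ h
  have hlt : ‖1 - 3 * S‖ < ‖1 + 3 * S‖ := by
    have hdiff : ‖1 + 3 * S‖ ^ 2 - ‖1 - 3 * S‖ ^ 2 = 12 * S.re := by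
      simp only [← Complex.normSq_eq_norm_sq, Complex.normSq_add, Complex.normSq_sub, map_mul,
        map_one, Complex.normSq_ofNat, one_mul, Complex.mul_re, Complex.conj_re, Complex.re_ofNat,
        Complex.conj_im, Complex.im_ofNat, neg_zero, mul_neg, zero_mul, sub_zero]
      ring
    exact (sq_lt_sq₀ (norm_nonneg _) (norm_nonneg _)).1 (by linarith)
  have hnorm : ‖(2 / 3 : ℂ)‖ = 2 / 3 := by norm_num
  rw [mem_ball, dist_eq_norm, hsub, norm_mul, hnorm, norm_div]
  exact mul_lt_of_lt_one_right (by norm_num) ((div_lt_one (norm_pos_iff.2 h)).2 hlt)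

theorem halfPlaneToDisc_halfPlaneToDisc {z : ℂ} (hz : 1 + 3 * z ≠ 0) :
    halfPlaneToDisc (halfPlaneToDisc z) = z := by
  have h : 1 + 3 * halfPlaneToDisc z = 4 * (1 + 3 * z)⁻¹ := by
    rw [halfPlaneToDisc]
    linear_combination -mul_inv_cancel₀ hz
  rw [halfPlaneToDisc, h, halfPlaneToDisc,
    div_eq_iff (mul_ne_zero (OfNat.ofNat_ne_zero 4) (inv_ne_zero hz))]
  linear_combination -mul_inv_cancel₀ hz

/-- The restriction of `halfPlaneToDisc` to the real line. -/
noncomputable def halfPlaneCoord (x : ℝ) : ℝ := (1 - x) / (1 + 3 * x)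

theorem halfPlaneToDisc_halfPlaneCoord {x : ℝ} (hx : 0 < x) :
    halfPlaneToDisc (halfPlaneCoord x) = x := by
  have h : (halfPlaneCoord x : ℂ) = halfPlaneToDisc x := by
    simp only [halfPlaneCoord, halfPlaneToDisc]
    push_cast
    rfl
  rw [h, halfPlaneToDisc_halfPlaneToDisc (one_add_three_mul_ne_zero (by simpa using hx))]

theorem halfPlaneCoord_pos {x : ℝ} (hx : x ∈ Ioo 0 1) : 0 < halfPlaneCoord x :=
  div_pos (sub_pos.2 hx.2) (by linarith [hx.1])

theorem halfPlaneCoord_lt_halfPlaneCoord {b x : ℝ} (hb : 0 < b) (hx : b < x) :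
    halfPlaneCoord x < halfPlaneCoord b := by
  rw [halfPlaneCoord, halfPlaneCoord, div_lt_div_iff₀ (by linarith) (by linarith)]
  nlinarith

theorem halfPlaneCoord_le_one_third {b : ℝ} (hb : 1 / 3 ≤ b) : halfPlaneCoord b ≤ 1 / 3 := by
  rw [halfPlaneCoord, div_le_iff₀ (by linarith)]
  linarith

theorem halfPlaneCoord_le_three_mul {b x : ℝ} (hb : b ∈ Icc (1 / 3) 1) (hx0 : 0 < x)
    (hx : x ≤ (1 + b) / 2) : halfPlaneCoord b ≤ 3 * halfPlaneCoord x := by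
  obtain ⟨hb3, hb1⟩ := hb
  rw [halfPlaneCoord, halfPlaneCoord, ← mul_div_assoc,
    div_le_div_iff₀ (by linarith) (by linarith)]
  nlinarith [mul_nonneg (sub_nonneg.2 hb3) (sub_nonneg.2 hb1),
    mul_nonneg (sub_nonneg.2 hx) (by linarith : 0 ≤ 1 + b)]

theorem one_sub_halfPlaneCoord_sq {x : ℝ} (hx : 0 < x) :
    1 - halfPlaneCoord x ^ 2 = 8 * (x * (1 + x)) / (1 + 3 * x) ^ 2 := by
  rw [halfPlaneCoord]
  field_simp
  ring

theorem hasDerivAt_halfPlaneCoord {x : ℝ} (hx : 1 + 3 * x ≠ 0) :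
    HasDerivAt halfPlaneCoord (-(4 / (1 + 3 * x) ^ 2)) x := by
  refine (((hasDerivAt_id x).const_sub 1).div
    (((hasDerivAt_id x).const_mul 3).const_add 1) hx).congr_deriv ?_
  simp only [id]
  ring

/-- The conformal map fixing `0` from the unit disc onto the disc with diameter `[-1/3, 1]` slit
along `[halfPlaneCoord e, 1)`. -/
noncomputable def slitDiscMap (e : ℝ) (w : ℂ) : ℂ :=
  halfPlaneToDisc (slitHalfPlaneMap e (cayleyMap w))

theorem slitDiscMap_zero (e : ℝ) : slitDiscMap e 0 = 0 := by
  simp [slitDiscMap, slitHalfPlaneMap, cayleyMap, halfPlaneToDisc]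

theorem slitDiscMap_mem_ball {e : ℝ} {w : ℂ} (he : 0 < e) (he1 : e < 1) (hw : w ∈ ball 0 1) :
    slitDiscMap e w ∈ ball (1 / 3 : ℂ) (2 / 3) :=
  halfPlaneToDisc_mem_ball <| re_csqrt_pos <|
    sq_add_mul_sq_mem_slitPlane he he1 (re_cayleyMap_pos hw)

theorem differentiableAt_slitDiscMap {e : ℝ} {w : ℂ} (hw : 1 + w ≠ 0)
    (hs : (e ^ 2 + (1 - e ^ 2) * cayleyMap w ^ 2 : ℂ) ∈ Complex.slitPlane) :
    DifferentiableAt ℂ (slitDiscMap e) w := by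
  have hcayley : DifferentiableAt ℂ cayleyMap w := by unfold cayleyMap; fun_prop (disch := exact hw)
  have hslit : DifferentiableAt ℂ (fun w ↦ slitHalfPlaneMap e (cayleyMap w)) w :=
    (Complex.differentiableAt_sqrt hs).comp w (by fun_prop)
  have h := one_add_three_mul_ne_zero (re_csqrt_pos hs)
  unfold slitDiscMap halfPlaneToDisc
  exact (hslit.const_sub 1).div ((hslit.const_mul 3).const_add 1) h

theorem differentiableOn_slitDiscMap {e : ℝ} (he : 0 < e) (he1 : e < 1) :
    DifferentiableOn ℂ (slitDiscMap e) (ball 0 1) := fun _ hw ↦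
  (differentiableAt_slitDiscMap (one_add_ne_zero_of_mem_ball hw) <|
    sq_add_mul_sq_mem_slitPlane he he1 (re_cayleyMap_pos hw)).differentiableWithinAt

/-- The argument of the boundary point of the upper half-circle which `slitDiscMap e` sends to
`halfPlaneCoord s`. It is meaningful for `0 ≤ s ≤ e < 1`. -/
noncomputable def slitAngle (e s : ℝ) : ℝ := 2 * Real.arctan (√(e ^ 2 - s ^ 2) / √(1 - e ^ 2))

theorem slitAngle_mem_Ioo {e s : ℝ} (hse : s ^ 2 < e ^ 2) (he : e ^ 2 < 1) :
    slitAngle e s ∈ Ioo 0 π := by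
  have hu : 0 < √(e ^ 2 - s ^ 2) / √(1 - e ^ 2) :=
    div_pos (Real.sqrt_pos.2 (sub_pos.2 hse)) (Real.sqrt_pos.2 (sub_pos.2 he))
  have := Real.arctan_pos.2 hu
  have := Real.arctan_lt_pi_div_two (√(e ^ 2 - s ^ 2) / √(1 - e ^ 2))
  constructor <;> unfold slitAngle <;> linarith

theorem hasDerivAt_slitAngle {e s : ℝ} (hse : s ^ 2 < e ^ 2) (he : e ^ 2 < 1) :
    HasDerivAt (slitAngle e)
      (-(2 * s * √(1 - e ^ 2) / ((1 - s ^ 2) * √(e ^ 2 - s ^ 2)))) s := by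
  have hr : 0 < √(e ^ 2 - s ^ 2) := Real.sqrt_pos.2 (sub_pos.2 hse)
  have hc : 0 < √(1 - e ^ 2) := Real.sqrt_pos.2 (sub_pos.2 he)
  have hr2 : √(e ^ 2 - s ^ 2) ^ 2 = e ^ 2 - s ^ 2 := Real.sq_sqrt (sub_pos.2 hse).le
  have hc2 : √(1 - e ^ 2) ^ 2 = 1 - e ^ 2 := Real.sq_sqrt (sub_pos.2 he).le
  have hsum : 1 - s ^ 2 = √(1 - e ^ 2) ^ 2 + √(e ^ 2 - s ^ 2) ^ 2 := by linarith
  have hsqrt := (((hasDerivAt_pow 2 s).const_sub (e ^ 2)).sqrt (sub_pos.2 hse).ne').div_const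
    √(1 - e ^ 2)
  refine (hsqrt.arctan.const_mul 2).congr_deriv ?_
  rw [hsum]
  generalize √(1 - e ^ 2) = c at *
  generalize √(e ^ 2 - s ^ 2) = r at *
  field_simp
  norm_num

theorem tendsto_slitDiscMap {e s θ : ℝ} (hs : 0 < s) (hse : s < e) (he : e < 1)
    (hθ : θ = slitAngle e s ∨ θ = -slitAngle e s) :
    Tendsto (slitDiscMap e) (𝓝 (circleMap 0 1 θ)) (𝓝 (halfPlaneToDisc s)) := by
  have hk : 0 < 1 - e ^ 2 := by nlinarith
  have hr : 0 ≤ e ^ 2 - s ^ 2 := by nlinarith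
  set u := √(e ^ 2 - s ^ 2) / √(1 - e ^ 2) with hu
  have hu2 : (1 - e ^ 2) * u ^ 2 = e ^ 2 - s ^ 2 := by
    rw [hu, div_pow, Real.sq_sqrt hr, Real.sq_sqrt hk.le, mul_div_cancel₀ _ hk.ne']
  obtain ⟨α, rfl, hcos, htan⟩ : ∃ α, θ = 2 * α ∧ Real.cos α ≠ 0 ∧ Real.tan α ^ 2 = u ^ 2 := by
    have hα := (Real.cos_arctan_pos u).ne'
    rcases hθ with rfl | rfl
    · exact ⟨_, rfl, hα, by rw [Real.tan_arctan]⟩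
    · exact ⟨_, (mul_neg _ _).symm, by rwa [Real.cos_neg],
        by rw [Real.tan_neg, neg_sq, Real.tan_arctan]⟩
  have hcos' : Complex.cos α ≠ 0 := mod_cast hcos
  have hsq : (e ^ 2 + (1 - e ^ 2) * cayleyMap (circleMap 0 1 (2 * α)) ^ 2 : ℂ) = (s : ℂ) ^ 2 := by
    have htan' : (1 - e ^ 2 : ℂ) * Complex.tan α ^ 2 = e ^ 2 - s ^ 2 := mod_cast htan ▸ hu2
    rw [cayleyMap_circleMap_two_mul hcos', neg_sq, mul_pow, Complex.I_sq]
    linear_combination -htan'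
  have hmem : ((s : ℂ) ^ 2) ∈ Complex.slitPlane := by
    rw [← Complex.ofReal_pow, Complex.ofReal_mem_slitPlane]
    positivity
  have hval : slitDiscMap e (circleMap 0 1 (2 * α)) = halfPlaneToDisc s := by
    rw [slitDiscMap, slitHalfPlaneMap, hsq, Complex.sqrt,
      Complex.sq_cpow_two_inv (by simpa)]
  exact hval ▸ (differentiableAt_slitDiscMap (one_add_circleMap_two_mul_ne_zero hcos')
    (hsq ▸ hmem)).continuousAt

theorem tendsto_slitDiscMap_ofReal {e x θ : ℝ} (hx : x ∈ Ioo 0 1) (hxe : halfPlaneCoord x < e)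
    (he : e < 1)
    (hθ : θ = slitAngle e (halfPlaneCoord x) ∨ θ = -slitAngle e (halfPlaneCoord x)) :
    Tendsto (slitDiscMap e) (𝓝 (circleMap 0 1 θ)) (𝓝 x) :=
  halfPlaneToDisc_halfPlaneCoord hx.1 ▸ tendsto_slitDiscMap (halfPlaneCoord_pos hx) hxe he hθ

theorem two_div_three_mul_le_neg_deriv_slitAngle {e s : ℝ} (hs : 0 < s) (hse : s < e)
    (hes : e ≤ 3 * s) (he : e ≤ 1 / 3) :
    2 / (3 * (1 - s ^ 2)) ≤ -deriv (slitAngle e) s := by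
  have he0 : 0 ≤ e := (hs.trans hse).le
  have hs1 : 0 < 1 - s ^ 2 := by nlinarith
  have hr : 0 < √(e ^ 2 - s ^ 2) := Real.sqrt_pos.2 (by nlinarith)
  have hle : √(e ^ 2 - s ^ 2) ≤ 3 * s * √(1 - e ^ 2) := by
    refine Real.sqrt_le_iff.2 ⟨by positivity, ?_⟩
    rw [mul_pow, Real.sq_sqrt (by nlinarith)]
    have he3 : e ^ 2 ≤ (1 / 3) ^ 2 := by gcongr
    have hes3 : e ^ 2 ≤ (3 * s) ^ 2 := by gcongr
    nlinarith
  rw [(hasDerivAt_slitAngle (by gcongr) (by nlinarith)).deriv, neg_neg,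
    div_le_div_iff₀ (by positivity) (by positivity)]
  nlinarith

theorem exists_hasDerivAt_slitAngle_comp {e x : ℝ} (hx : x ∈ Ioo 0 1)
    (hxe : halfPlaneCoord x < e) (hex : e ≤ 3 * halfPlaneCoord x) (he : e ≤ 1 / 3) :
    ∃ d, 1 / 6 ≤ d ∧ HasDerivAt (fun x ↦ slitAngle e (halfPlaneCoord x)) d x := by
  have hx0 := hx.1
  have hx1 := hx.2
  have hs := halfPlaneCoord_pos hx
  have hslit : DifferentiableAt ℝ (slitAngle e) (halfPlaneCoord x) :=
    (hasDerivAt_slitAngle (by gcongr) (by nlinarith)).differentiableAt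
  refine ⟨_, ?_, hslit.hasDerivAt.comp x (hasDerivAt_halfPlaneCoord (by linarith))⟩
  rw [← neg_mul_comm]
  calc (1 / 6 : ℝ) ≤ 1 / (3 * (x * (1 + x))) := by
        apply one_div_le_one_div_of_le <;> nlinarith
    _ = 2 / (3 * (1 - halfPlaneCoord x ^ 2)) * (4 / (1 + 3 * x) ^ 2) := by
        rw [one_sub_halfPlaneCoord_sq hx0]
        field_simp
        norm_num
    _ ≤ -deriv (slitAngle e) (halfPlaneCoord x) * (4 / (1 + 3 * x) ^ 2) := by
        gcongr
        exact two_div_three_mul_le_neg_deriv_slitAngle hs hxe hex he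

/-! ### Functions of controlled growth on the unit disc -/

theorem sq_norm_one_sub_le {z : ℂ} (hz : z ∈ ball (1 / 3 : ℂ) (2 / 3)) :
    ‖1 - z‖ ^ 2 ≤ 4 * (1 - ‖z‖) := by
  have hdisc : ‖z - 1 / 3‖ ^ 2 ≤ (2 / 3) ^ 2 := by
    gcongr
    exact (mem_ball_iff_norm.1 hz).le
  have hstewart : ‖1 - z‖ ^ 2 - 2 * (1 - ‖z‖ ^ 2) = 3 * (‖z - 1 / 3‖ ^ 2 - (2 / 3) ^ 2) := by
    have hthird : (1 / 3 : ℂ) = (1 / 3 : ℝ) := by norm_num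
    simp only [hthird, ← Complex.normSq_eq_norm_sq, Complex.normSq_apply, Complex.sub_re,
      Complex.sub_im, Complex.one_re, Complex.one_im, Complex.ofReal_re, Complex.ofReal_im]
    ring
  nlinarith only [hdisc, hstewart, sq_nonneg (1 - ‖z‖)]

theorem ball_one_third_subset_ball : ball (1 / 3 : ℂ) (2 / 3) ⊆ ball 0 1 :=
  ball_subset_ball' (by norm_num)

theorem norm_mul_one_sub_sq_div_le_one {M : ℝ} {c z : ℂ} (hz : z ∈ ball (1 / 3 : ℂ) (2 / 3))
    (hc : ‖c‖ ≤ M / (1 - ‖z‖)) : ‖c * (1 - z) ^ 2 / (4 * M)‖ ≤ 1 := by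
  have hz1 : 0 < 1 - ‖z‖ := sub_pos.2 (mem_ball_zero_iff.1 (ball_one_third_subset_ball hz))
  have hcM : ‖c‖ * (1 - ‖z‖) ≤ M := (le_div_iff₀ hz1).1 hc
  have hM : 0 ≤ M := (by positivity : 0 ≤ ‖c‖ * (1 - ‖z‖)).trans hcM
  have hle : ‖c‖ * ‖1 - z‖ ^ 2 ≤ 4 * M :=
    calc ‖c‖ * ‖1 - z‖ ^ 2 ≤ ‖c‖ * (4 * (1 - ‖z‖)) := by gcongr; exact sq_norm_one_sub_le hz
      _ = 4 * (‖c‖ * (1 - ‖z‖)) := by ring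
      _ ≤ 4 * M := by gcongr
  simpa [abs_of_nonneg hM] using div_le_one_of_le₀ hle (by positivity)

theorem ofReal_mem_ball_one_third {x : ℝ} (hx : x ∈ Ioo 0 1) :
    (x : ℂ) ∈ ball (1 / 3 : ℂ) (2 / 3) := by
  rw [mem_ball, dist_eq_norm, show (x - 1 / 3 : ℂ) = (x - 1 / 3 : ℝ) by push_cast; rfl,
    Complex.norm_real, Real.norm_eq_abs, abs_lt]
  constructor <;> linarith [hx.1, hx.2]

theorem setLIntegral_neg_log_norm_le_of_norm_le_one {b c : ℝ} {g : ℂ → ℂ}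
    (hb : b ∈ Ico (1 / 3) 1) (hc : c ≤ (1 + b) / 2)
    (hg : DifferentiableOn ℂ g (ball (1 / 3) (2 / 3)))
    (hg1 : ∀ z ∈ ball (1 / 3) (2 / 3), ‖g z‖ ≤ 1) (hg0 : g 0 ≠ 0) :
    ∫⁻ x : ℝ in Ioo b c, ENNReal.ofReal (-log ‖g x‖) ≤
      ENNReal.ofReal (6 * π * -log ‖g 0‖) := by
  obtain ⟨hb3, hb1⟩ := hb
  have hb0 : 0 < b := by linarith
  set e := halfPlaneCoord b
  have he : 0 < e := halfPlaneCoord_pos ⟨hb0, hb1⟩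
  have he3 : e ≤ 1 / 3 := halfPlaneCoord_le_one_third hb3
  have he1 : e < 1 := by linarith
  have hmaps : MapsTo (slitDiscMap e) (ball 0 1) (ball (1 / 3) (2 / 3)) :=
    fun w hw ↦ slitDiscMap_mem_ball he he1 hw
  have hmem {x : ℝ} (hx : x ∈ Ioo b c) : x ∈ Ioo 0 1 := ⟨hb0.trans hx.1, by linarith [hx.2]⟩
  have hlt {x : ℝ} (hx : x ∈ Ioo b c) : halfPlaneCoord x < e :=
    halfPlaneCoord_lt_halfPlaneCoord hb0 hx.1
  have hangle (x : ℝ) (hx : x ∈ Ioo b c) :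
      ∃ d, 1 / 6 ≤ d ∧ HasDerivAt (fun x ↦ slitAngle e (halfPlaneCoord x)) d x :=
    exists_hasDerivAt_slitAngle_comp (hmem hx) (hlt hx)
      (halfPlaneCoord_le_three_mul ⟨hb3, hb1.le⟩ (hmem hx).1 (hx.2.le.trans hc)) he3
  have hangle_mem : MapsTo (fun x ↦ slitAngle e (halfPlaneCoord x)) (Ioo b c) (Ioo 0 π) :=
    fun x hx ↦ slitAngle_mem_Ioo
      (pow_lt_pow_left₀ (hlt hx) (halfPlaneCoord_pos (hmem hx)).le two_ne_zero) (by nlinarith)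
  have htendsto (x : ℝ) (hx : x ∈ Ioo b c) (θ)
      (hθ : θ = slitAngle e (halfPlaneCoord x) ∨ θ = -slitAngle e (halfPlaneCoord x)) :
      Tendsto (g ∘ slitDiscMap e) (𝓝 (circleMap 0 1 θ)) (𝓝 (g x)) :=
    (hg.continuousOn.continuousAt (isOpen_ball.mem_nhds
      (ofReal_mem_ball_one_third (hmem hx)))).tendsto.comp
      (tendsto_slitDiscMap_ofReal (hmem hx) (hlt hx) he1 hθ)
  have hle := setLIntegral_neg_log_norm_boundary_le
    (hg.comp (differentiableOn_slitDiscMap he he1) hmaps) (fun w hw ↦ hg1 _ (hmaps hw))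
    (by rwa [Function.comp_apply, slitDiscMap_zero]) (δ := 1 / 6) (by norm_num)
    (fun x hx ↦ have ⟨_, _, h⟩ := hangle x hx; h.differentiableAt)
    (fun x hx ↦ have ⟨_, hd, h⟩ := hangle x hx; h.deriv ▸ hd) hangle_mem
    (g := fun x ↦ g x) htendsto
  rw [Function.comp_apply, slitDiscMap_zero] at hle
  convert hle using 2
  ring

theorem neg_log_norm_le_neg_log_norm_mul_one_sub_sq_div {M x : ℝ} {c : ℂ} (hM : 1 ≤ M)
    (hx : x ∈ Ioo 0 1) :
    -log ‖c‖ ≤ -log ‖c * (1 - x) ^ 2 / (4 * M)‖ := by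
  rcases eq_or_ne c 0 with rfl | hc
  · simp
  have h1x : (1 - x : ℂ) ≠ 0 := by exact_mod_cast (sub_pos.2 hx.2).ne'
  have hnorm : ‖(1 - x : ℂ)‖ ≤ 1 := by
    rw [← Complex.ofReal_one, ← Complex.ofReal_sub, Complex.norm_real, Real.norm_eq_abs, abs_le]
    constructor <;> linarith [hx.1, hx.2]
  have h4M : ‖(4 * M : ℂ)‖ = 4 * M := by simp [abs_of_pos (one_pos.trans_le hM)]
  rw [neg_le_neg_iff]
  refine Real.log_le_log (norm_pos_iff.2 ?_) ?_
  · have : (4 * M : ℂ) ≠ 0 := norm_pos_iff.1 (h4M ▸ by positivity)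
    positivity
  · rw [norm_div, norm_mul, norm_pow, h4M, div_le_iff₀ (by positivity)]
    gcongr
    have := pow_le_one₀ (norm_nonneg _) hnorm (n := 2)
    linarith

theorem setLIntegral_neg_log_norm_le {b c M : ℝ} {f : ℂ → ℂ}
    (hb : b ∈ Ico (1 / 3) 1) (hc : c ≤ (1 + b) / 2)
    (hf : DifferentiableOn ℂ f (ball 0 1)) (hfM : ∀ z ∈ ball 0 1, ‖f z‖ ≤ M / (1 - ‖z‖))
    (hf0 : 1 ≤ ‖f 0‖) :
    ∫⁻ x : ℝ in Ioo b c, ENNReal.ofReal (-log ‖f x‖) ≤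
      ENNReal.ofReal (6 * π * log (4 * M)) := by
  have hM : 1 ≤ M := by simpa using hf0.trans (hfM 0 (mem_ball_self one_pos))
  set g : ℂ → ℂ := fun z ↦ f z * (1 - z) ^ 2 / (4 * M) with hg_def
  have hg : DifferentiableOn ℂ g (ball (1 / 3) (2 / 3)) :=
    ((hf.mono ball_one_third_subset_ball).mul (by fun_prop)).div_const _
  have hg1 (z) (hz : z ∈ ball (1 / 3 : ℂ) (2 / 3)) : ‖g z‖ ≤ 1 :=
    norm_mul_one_sub_sq_div_le_one hz (hfM z (ball_one_third_subset_ball hz))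
  have hg0 : ‖g 0‖ = ‖f 0‖ / (4 * M) := by simp [hg_def, abs_of_pos (one_pos.trans_le hM)]
  have hg0_ne : g 0 ≠ 0 := norm_pos_iff.1 (hg0 ▸ by positivity)
  calc ∫⁻ x : ℝ in Ioo b c, ENNReal.ofReal (-log ‖f x‖)
    _ ≤ ∫⁻ x : ℝ in Ioo b c, ENNReal.ofReal (-log ‖g x‖) :=
        setLIntegral_mono' measurableSet_Ioo fun x hx ↦ ENNReal.ofReal_le_ofReal <|
          neg_log_norm_le_neg_log_norm_mul_one_sub_sq_div hM
            ⟨by linarith [hb.1, hx.1], by linarith [hb.2, hx.2]⟩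
    _ ≤ ENNReal.ofReal (6 * π * -log ‖g 0‖) :=
        setLIntegral_neg_log_norm_le_of_norm_le_one hb hc hg hg1 hg0_ne
    _ ≤ ENNReal.ofReal (6 * π * log (4 * M)) := by
        gcongr
        rw [hg0, ← Real.log_inv, inv_div]
        exact Real.log_le_log (by positivity) (div_le_self (by positivity) hf0)

theorem norm_sum_mul_pow_le {n : ℕ} {c : Fin n → ℂ} {M : ℝ} {z : ℂ} (hc : ∀ j, ‖c j‖ ≤ M)
    (hM : 0 ≤ M) (hz : z ∈ ball 0 1) : ‖∑ j, c j * z ^ (j : ℕ)‖ ≤ M / (1 - ‖z‖) := by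
  have hz1 : ‖z‖ < 1 := mem_ball_zero_iff.1 hz
  calc ‖∑ j, c j * z ^ (j : ℕ)‖ ≤ ∑ j : Fin n, M * ‖z‖ ^ (j : ℕ) :=
        norm_sum_le_of_le _ fun j _ ↦ by rw [norm_mul, norm_pow]; gcongr; exact hc j
    _ = M * ∑ j ∈ Finset.range n, ‖z‖ ^ j := by
        rw [← Finset.mul_sum, Fin.sum_univ_eq_sum_range (‖z‖ ^ ·)]
    _ ≤ M * (1 - ‖z‖)⁻¹ := by
        gcongr
        rw [← tsum_geometric_of_lt_one (norm_nonneg z) hz1]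
        exact (summable_geometric_of_lt_one (norm_nonneg z) hz1).sum_le_tsum _
          fun j _ ↦ by positivity

theorem geometric_mean_lower_bound_general {a M : ℝ} {f : ℂ → ℂ} (ha : a ∈ Ioc 0 (1 / 3))
    (hf : DifferentiableOn ℂ f (ball 0 1)) (hfM : ∀ z ∈ ball 0 1, ‖f z‖ ≤ M / (1 - ‖z‖))
    (hf0 : 1 ≤ ‖f 0‖) :
    Real.exp (-(6 * π) * log (4 * M) / a) ≤
      Real.exp ((1 / a) * ∫ x : ℝ in (1 - 2 * a)..(1 - a), log ‖f x‖) := by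
  have hM : 1 ≤ M := by simpa using hf0.trans (hfM 0 (mem_ball_self one_pos))
  have hle : 1 - 2 * a ≤ 1 - a := by linarith [ha.1]
  have hint : IntervalIntegrable (fun x : ℝ ↦ log ‖f x‖) volume (1 - 2 * a) (1 - a) := by
    refine intervalIntegrable_log_norm_ofReal fun x hx ↦
      hf.analyticAt (isOpen_ball.mem_nhds (mem_ball_zero_iff.2 ?_))
    rw [uIcc_of_le hle] at hx
    rw [Complex.norm_real, Real.norm_eq_abs, abs_lt]
    constructor <;> linarith [ha.1, ha.2, hx.1, hx.2]
  have hlower : -∫ x : ℝ in (1 - 2 * a)..(1 - a), log ‖f x‖ ≤ 6 * π * log (4 * M) := by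
    rw [intervalIntegral.integral_of_le hle, ← restrict_Ioo_eq_restrict_Ioc, ← integral_neg]
    exact integral_le_of_lintegral_ofReal_le
      ((intervalIntegrable_iff_integrableOn_Ioo_of_le hle).1 hint).neg
      (mul_nonneg (by positivity) (Real.log_nonneg (by linarith)))
      (setLIntegral_neg_log_norm_le ⟨by linarith [ha.2], by linarith [ha.1]⟩ (by linarith)
        hf hfM hf0)
  rw [Real.exp_le_exp, one_div_mul_eq_div]
  gcongr
  · exact ha.1.le
  · linarith

theorem geometric_mean_lower_bound_of_abs_coeff_le {a M : ℝ} {n : ℕ} {c : Fin (n + 1) → ℝ}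
    (ha : a ∈ Ioc 0 (1 / 3)) (hc : ∀ j, |c j| ≤ M) (hc0 : 1 ≤ |c 0|) :
    Real.exp (-(6 * π) * log (4 * M) / a) ≤
      Real.exp ((1 / a) * ∫ x in (1 - 2 * a)..(1 - a), log |∑ j, c j * x ^ (j : ℕ)|) := by
  set f : ℂ → ℂ := fun z ↦ ∑ j, c j * z ^ (j : ℕ) with hf
  have hf0 : f 0 = c 0 := by simp [hf, Fin.sum_univ_succ]
  have hfx (x : ℝ) : ‖f x‖ = |∑ j, c j * x ^ (j : ℕ)| := by
    rw [← Real.norm_eq_abs, ← Complex.norm_real]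
    push_cast [hf]
    rfl
  have hfM (z) (hz : z ∈ ball 0 1) : ‖f z‖ ≤ M / (1 - ‖z‖) :=
    norm_sum_mul_pow_le (fun j ↦ by simpa using hc j) ((abs_nonneg _).trans (hc 0)) hz
  simpa only [hfx] using
    geometric_mean_lower_bound_general ha (f := f) (by fun_prop) hfM (by simpa [hf0] using hc0)

theorem six_mul_pi_le_nine_mul_pi_div_sqrt_two : 6 * π ≤ 9 * π / √2 := by
  rw [le_div_iff₀ (by positivity)]
  nlinarith [Real.sq_sqrt zero_le_two, Real.sqrt_nonneg 2, pi_pos]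

/-- Geometric-mean lower bound: `‖P‖_{L_0(I_a)} ≥ exp(-c₁ log(4M)/a)` with `c₁ = 9π/√2`
for `P(x) = ∑_{j=0}^n b_j a_j x^j` with `a_j ∈ [1,M]`, `b_j ∈ {-1,0,1}`, `b_0 ∈ {-1,1}`. -/
theorem geometric_mean_lower_bound (a : ℝ) (ha : a ∈ Set.Ioc (0 : ℝ) (1 / 3))
    (n : ℕ) (M : ℝ) (hM : 1 ≤ M)
    (A b : Fin (n + 1) → ℝ)
    (hA : ∀ j, A j ∈ Set.Icc (1 : ℝ) M)
    (hb : ∀ j, b j = -1 ∨ b j = 0 ∨ b j = 1)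
    (hb0 : b 0 = -1 ∨ b 0 = 1) :
    Real.exp ((1 / a) * ∫ x in (1 - 2 * a)..(1 - a),
        Real.log |∑ j : Fin (n + 1), b j * A j * x ^ (j : ℕ)|) ≥
      Real.exp (-(9 * Real.pi / Real.sqrt 2) * Real.log (4 * M) / a) := by
  have hcoeff (j) : |b j * A j| ≤ M := by
    have := (hA j).1
    have := (hA j).2
    rcases hb j with h | h | h <;> rw [h, abs_le] <;> constructor <;> linarith
  have hcoeff0 : 1 ≤ |b 0 * A 0| := by
    rcases hb0 with h | h <;> simpa [h] using (hA 0).1.trans (le_abs_self _)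
  refine (geometric_mean_lower_bound_of_abs_coeff_le ha hcoeff hcoeff0).trans' ?_
  have hlog : 0 ≤ log (4 * M) := Real.log_nonneg (by linarith)
  have ha0 : 0 ≤ a := ha.1.le
  gcongr
  exact six_mul_pi_le_nine_mul_pi_div_sqrt_two
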